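/- Let F be a field, L/F a finite Galois field extension with Galois group G = Gal(L/F), and let H, H' ≤ G be subgroups with fixed fields E = L^H and E' = L^{H'} (intermediate fields of L/F). Let p be a prime number and let P ≤ H be a Sylow p-subgroup of H. Then the following are equivalent: (i) there exists g ∈ G such that P ≤ g H' g⁻¹ (i.e. a Sylow p-subgroup of H is subconjugate to H' in G); (ii) there exists a maximal ideal m of the commutative F-algebra E ⊗_F E' such that p does not divide the degree [(E ⊗_F E')/m : E] of the residue field over E (via the map E → E ⊗_F E' → (E ⊗_F E')/m induced by the left tensor factor). -/

import Mathlib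

open scoped TensorProduct

open IntermediateField

set_option synthInstance.maxHeartbeats 1000000
set_option maxHeartbeats 1000000

/-!
Write `E = L^H` and `E' = L^{H'}`. Up to isomorphism, the residue fields of `E ⊗ E'` are the images
of the `E`-algebra maps `φ : E ⊗ E' → L`: a residue field is generated over `E` by the image of
`E'`, whose elements have minimal polynomials splitting in the normal extension `L`, so it embeds
into `L` over `E`. By the Galois correspondence the degree of the residue field over `E` is the
index `[H : N]`, where `N ≤ H` fixes the image of `φ` pointwise
(`exists_isMaximal_iff_exists_algHom`). It remains to compare `P` with these groups `N`.

* If `P ≤ g H' g⁻¹`, then `P` fixes the image of `φ : x ⊗ y ↦ x * g y`, because it fixes both `E`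
  and `g E'`. So `P ≤ N`, and `[H : N]` divides `[H : P]`, which is prime to `p`.
* Conversely, the restriction of `φ` to `E'` extends to some `g ∈ G`, so `N ≤ g H' g⁻¹`. If
  `[H : N]` is prime to `p`, then `N` contains a conjugate of `P` under `H`
  (`Sylow.exists_conj_mem_of_not_dvd_index`).
-/

/-- A subgroup of index prime to `p` contains a conjugate of any given Sylow `p`-subgroup: a Sylow
`p`-subgroup of the subgroup is also one of the whole group. -/
theorem Sylow.exists_conj_mem_of_not_dvd_index {G : Type*} [Group G] [Finite G] {p : ℕ}
    [Fact p.Prime] (P : Sylow p G) (N : Subgroup G) (hN : ¬ p ∣ N.index) :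
    ∃ h : G, ∀ x ∈ P, h * x * h⁻¹ ∈ N := by
  obtain ⟨Q⟩ : Nonempty (Sylow p N) := inferInstance
  have hQ : ¬ p ∣ ((Q : Subgroup N).map N.subtype).index := by
    rw [Subgroup.index_map_subtype, (Fact.out : p.Prime).dvd_mul]
    exact not_or.mpr ⟨Q.not_dvd_index, hN⟩
  obtain ⟨h, hh⟩ := MulAction.exists_smul_eq G P ((Q.2.map N.subtype).toSylow hQ)
  refine ⟨h, fun x hx => ?_⟩
  have h1 : h * x * h⁻¹ ∈ h • P := by
    change h * x * h⁻¹ ∈ ((h • P : Sylow p G) : Subgroup G)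
    rw [Sylow.coe_subgroup_smul]
    exact ⟨x, hx, by simp⟩
  rw [hh, IsPGroup.mem_toSylow] at h1
  obtain ⟨y, -, hy⟩ := h1
  rw [← hy]
  exact y.2

/-- The Galois correspondence for an extension `K` of `L^H` embedded in `L`: its degree is the
index in `H` of the subgroup fixing the image of `K`. -/
theorem finrank_eq_relIndex_fixingSubgroup {F L : Type*} [Field F] [Field L] [Algebra F L]
    [FiniteDimensional F L] [IsGalois F L] (H : Subgroup (L ≃ₐ[F] L))
    {K : Type*} [Field K] [Algebra F K] [Algebra (fixedField H) K]
    [IsScalarTower F (fixedField H) K] (f : K →ₐ[fixedField H] L) :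
    Module.finrank (fixedField H) K
      = ((f.restrictScalars F).fieldRange.fixingSubgroup).relIndex H := by
  set N := (f.restrictScalars F).fieldRange.fixingSubgroup with hN
  have hNH : N ≤ H := by
    rw [← IntermediateField.fixingSubgroup_fixedField H]
    refine IntermediateField.fixingSubgroup_le fun x hx => ?_
    exact ⟨algebraMap (fixedField H) K ⟨x, hx⟩, f.commutes ⟨x, hx⟩⟩
  have h1 : Module.finrank F K = N.index := by
    rw [hN, ← IntermediateField.finrank_eq_fixingSubgroup_index]
    exact (AlgEquiv.ofInjectiveField (f.restrictScalars F)).toLinearEquiv.finrank_eq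
  have h2 : Module.finrank F (fixedField H) = H.index := by
    rw [IntermediateField.finrank_eq_fixingSubgroup_index,
      IntermediateField.fixingSubgroup_fixedField]
  have h3 := Module.finrank_mul_finrank F (fixedField H) K
  rw [h1, h2, ← Subgroup.relIndex_mul_index hNH, mul_comm] at h3
  exact Nat.eq_of_mul_eq_mul_right (Nat.pos_of_ne_zero Subgroup.index_ne_zero_of_finite) h3

/-- The residue fields of a finite `L^H`-algebra `A` which is generated by the image of a subfield
`E'` of `L` are, up to isomorphism, the images of the `L^H`-algebra maps `A → L`. Their degrees are
then given by the Galois correspondence. -/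
theorem exists_isMaximal_iff_exists_algHom {F L : Type*} [Field F] [Field L] [Algebra F L]
    [FiniteDimensional F L] [IsGalois F L] (H : Subgroup (L ≃ₐ[F] L)) (E' : IntermediateField F L)
    {A : Type*} [CommRing A] [Algebra F A] [Algebra (fixedField H) A]
    [IsScalarTower F (fixedField H) A] [Module.Finite (fixedField H) A] (j : E' →ₐ[F] A)
    (hj : Algebra.adjoin (fixedField H) (Set.range j) = ⊤) (p : ℕ) :
    (∃ m : Ideal A, m.IsMaximal ∧ ¬ p ∣ Module.finrank (fixedField H) (A ⧸ m)) ↔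
      ∃ φ : A →ₐ[fixedField H] L,
        ¬ p ∣ (_root_.fixingSubgroup (L ≃ₐ[F] L) (Set.range φ)).relIndex H := by
  constructor
  · rintro ⟨m, hm, hdvd⟩
    let _ := Ideal.Quotient.field m
    let q : A →ₐ[fixedField H] A ⧸ m := Ideal.Quotient.mkₐ (fixedField H) m
    have hq : Function.Surjective q := Ideal.Quotient.mk_surjective
    let i : E' →ₐ[F] A ⧸ m := (q.restrictScalars F).comp j
    obtain ⟨f⟩ : Nonempty (A ⧸ m →ₐ[fixedField H] L) := by
      refine IntermediateField.nonempty_algHom_of_adjoin_splits (S := Set.range i) ?_ ?_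
      · rintro _ ⟨y, rfl⟩
        have hy : IsIntegral F y := Algebra.IsIntegral.isIntegral y
        have hiy : IsIntegral F (i y) := hy.map i
        refine ⟨hiy.tower_top, hiy.minpoly_splits_tower_top ?_⟩
        rw [minpoly.algHom_eq i i.injective, ← minpoly.algHom_eq E'.val E'.val.injective]
        exact Normal.splits inferInstance _
      · rw [eq_top_iff]
        intro k _
        obtain ⟨t, rfl⟩ := hq k
        refine IntermediateField.algebra_adjoin_le_adjoin _ _ ?_
        have hr : Set.range i = q '' Set.range j := Set.range_comp q j
        rw [hr, ← AlgHom.map_adjoin, hj]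
        exact ⟨t, trivial, rfl⟩
    refine ⟨f.comp q, fun hd => hdvd ?_⟩
    rw [finrank_eq_relIndex_fixingSubgroup H f]
    have hr : Set.range (f.comp q) = ((f.restrictScalars F).fieldRange : Set L) := by
      rw [AlgHom.coe_comp, hq.range_comp, AlgHom.coe_fieldRange]
      rfl
    rw [hr] at hd
    exact hd
  · rintro ⟨φ, hdvd⟩
    have : (RingHom.ker φ).IsPrime := RingHom.ker_isPrime φ
    have : IsArtinianRing A := IsArtinianRing.of_finite (fixedField H) A
    have hm : (RingHom.ker φ).IsMaximal := IsArtinianRing.isMaximal_of_isPrime _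
    refine ⟨RingHom.ker φ, hm, fun hd => hdvd ?_⟩
    let _ := Ideal.Quotient.field (RingHom.ker φ)
    let f : A ⧸ RingHom.ker φ →ₐ[fixedField H] L := Ideal.kerLiftAlg φ
    rw [finrank_eq_relIndex_fixingSubgroup H f] at hd
    have hr : Set.range φ = ((f.restrictScalars F).fieldRange : Set L) := by
      rw [AlgHom.coe_fieldRange]
      exact Ideal.Quotient.mk_surjective.range_comp f
    rw [hr]
    exact hd

/-- `E ⊗ E'` is generated as an `E`-algebra by the right factor. -/
theorem adjoin_range_includeRight (F E E' : Type*) [Field F] [Field E] [Field E'] [Algebra F E]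
    [Algebra F E'] :
    Algebra.adjoin E
      (Set.range (Algebra.TensorProduct.includeRight : E' →ₐ[F] E ⊗[F] E')) = ⊤ := by
  rw [eq_top_iff]
  intro t _
  induction t with
  | zero => exact zero_mem _
  | add a b ha hb => exact add_mem (ha trivial) (hb trivial)
  | tmul x y =>
    have hxy : x ⊗ₜ[F] y = x • ((1 : E) ⊗ₜ[F] y) := by simp [TensorProduct.smul_tmul']
    rw [hxy]
    exact Subalgebra.smul_mem _ (Algebra.subset_adjoin (Set.mem_range_self y)) x

/-- finite case of the Lemma in Section 10, `eq:EpE'`.  Let `L/F` be a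
finite Galois extension with group `G = Gal(L/F)`, let `H, H' ≤ G` be subgroups with
fixed fields `E = L^H`, `E' = L^{H'}`, let `p` be a prime and `P` a Sylow `p`-subgroup
of `H`.  Then some conjugate of `P` lies in `H'` (i.e. a Sylow `p`-subgroup of `H` is
subconjugate to `H'` in `G`) if and only if the commutative `F`-algebra `E ⊗[F] E'`
has a maximal ideal `m` such that `p` does not divide the degree of the residue field
`(E ⊗[F] E')/m` over `E` (via the map induced by the left tensor factor). -/
theorem sylow_subconjugate_iff_tensor_residue_degree_prime_to_p
    (F L : Type*) [Field F] [Field L] [Algebra F L]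
    [FiniteDimensional F L] [IsGalois F L]
    (H H' : Subgroup (L ≃ₐ[F] L))
    (p : ℕ) (hp : p.Prime) (P : Sylow p H) :
    (∃ g : L ≃ₐ[F] L,
        Subgroup.map H.subtype (P : Subgroup H) ≤
          Subgroup.map (MulAut.conj g).toMonoidHom H') ↔
    (letI : CommRing ((fixedField H) ⊗[F] (fixedField H')) :=
        Algebra.TensorProduct.instCommRing
      ∃ m : Ideal ((fixedField H) ⊗[F] (fixedField H')),
        m.IsMaximal ∧
        ¬ (p ∣ Module.finrank (fixedField H)
            (((fixedField H) ⊗[F] (fixedField H')) ⧸ m))) := by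
  have : Fact p.Prime := ⟨hp⟩
  refine Iff.trans ?_ (exists_isMaximal_iff_exists_algHom
    (A := fixedField H ⊗[F] fixedField H') H (fixedField H') Algebra.TensorProduct.includeRight
    (adjoin_range_includeRight F (fixedField H) (fixedField H')) p).symm
  constructor
  · rintro ⟨g, hg⟩
    obtain ⟨φ, hφ⟩ : ∃ φ : fixedField H ⊗[F] fixedField H' →ₐ[fixedField H] L,
        ∀ x y, φ (x ⊗ₜ y) = (x : L) * g y :=
      ⟨Algebra.TensorProduct.productLeftAlgHom (Algebra.ofId (fixedField H) L)
        ((g : L →ₐ[F] L).comp (fixedField H').val), fun _ _ => rfl⟩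
    refine ⟨φ, fun hdvd => P.not_dvd_index (hdvd.trans ?_)⟩
    refine Subgroup.index_dvd_of_le fun σ hσ => ?_
    rw [Subgroup.mem_subgroupOf, mem_fixingSubgroup_iff]
    rintro _ ⟨t, rfl⟩
    change (σ : L ≃ₐ[F] L) (φ t) = φ t
    induction t with
    | zero => rw [map_zero, map_zero]
    | add a b ha hb => rw [map_add, map_add, ha, hb]
    | tmul x y =>
      obtain ⟨τ, hτ, hτσ⟩ := hg ⟨σ, hσ, rfl⟩
      have h1 : (σ : L ≃ₐ[F] L) x = x := (mem_fixedField_iff H _).1 x.2 _ σ.2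
      have h2 : τ y = y := (mem_fixedField_iff H' _).1 y.2 _ hτ
      have h3 : (σ : L ≃ₐ[F] L) (g y) = g y := by
        change g * τ * g⁻¹ = (σ : L ≃ₐ[F] L) at hτσ
        rw [← hτσ, AlgEquiv.mul_apply, ← AlgEquiv.mul_apply g⁻¹, inv_mul_cancel,
          AlgEquiv.one_apply, AlgEquiv.mul_apply, h2]
      rw [hφ, map_mul, h1, h3]
  · rintro ⟨φ, hdvd⟩
    obtain ⟨h, hh⟩ := P.exists_conj_mem_of_not_dvd_index _ hdvd
    let i : fixedField H' →ₐ[F] L :=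
      (φ.restrictScalars F).comp Algebra.TensorProduct.includeRight
    let g : L ≃ₐ[F] L := AlgEquiv.ofBijective (i.liftNormal L) (AlgHom.normal_bijective F L L _)
    have hg (y : fixedField H') : g y = φ (1 ⊗ₜ y) := i.liftNormal_commutes L y
    refine ⟨(h : L ≃ₐ[F] L)⁻¹ * g, ?_⟩
    rintro _ ⟨σ, hσ, rfl⟩
    have hσ' := (_root_.mem_fixingSubgroup_iff (L ≃ₐ[F] L)).1 (Subgroup.mem_subgroupOf.1 (hh σ hσ))
    refine ⟨g⁻¹ * (h * σ * h⁻¹ : L ≃ₐ[F] L) * g, ?_, ?_⟩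
    -- By the Galois correspondence, the group fixing the field of invariants is the original one.
    · rw [SetLike.mem_coe, ← IntermediateField.fixingSubgroup_fixedField H',
        IntermediateField.mem_fixingSubgroup_iff]
      intro y hy
      have h1 : (h * σ * h⁻¹ : L ≃ₐ[F] L) (g y) = g y := by
        rw [hg ⟨y, hy⟩]
        exact hσ' _ ⟨_, rfl⟩
      rw [AlgEquiv.mul_apply, AlgEquiv.mul_apply, h1, ← AlgEquiv.mul_apply, inv_mul_cancel,
        AlgEquiv.one_apply]
    · change (h : L ≃ₐ[F] L)⁻¹ * g * (g⁻¹ * (h * σ * h⁻¹ : L ≃ₐ[F] L) * g) *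
        ((h : L ≃ₐ[F] L)⁻¹ * g)⁻¹ = σ
      simp only [Subgroup.coe_inv]
      group
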